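/- Let $K$ be a field, $n, k$ positive integers, and $\alpha_1,\dots,\alpha_k$ distinct nonzero elements of $K$. With $A_i = XY^n/(X-\alpha_i Y) \in K(X,Y)$ and $R = K[Y, A_1,\dots,A_k]$, the quotient $R/YR$ is isomorphic as a $K$-algebra to $K[T_1,\dots,T_k]/(T_iT_j : i \neq j)$. -/

import Mathlib

open MvPolynomial

lemma spec_aux {K P L F σ : Type*} [Field K] [CommRing P] [Algebra K P] [Field L] [Algebra K L]
    [Field F] [Algebra K F] (ι : P →ₐ[K] L) (hι : Function.Injective ι) (Φ : P →ₐ[K] F)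
    (a : σ → L) (b : σ → F)
    (h : ∀ j, ∃ u v, Φ v ≠ 0 ∧ a j * ι v = ι u ∧ b j * Φ v = Φ u)
    (p : MvPolynomial σ K) (hp : aeval a p = 0) : aeval b p = 0 := by
  have key : ∀ p : MvPolynomial σ K,
      ∃ u v, Φ v ≠ 0 ∧ aeval a p * ι v = ι u ∧ aeval b p * Φ v = Φ u := by
    intro p
    induction p using MvPolynomial.induction_on with
    | C c =>
      refine ⟨algebraMap K P c, 1, by simp, ?_, ?_⟩ <;> simp [algebraMap_eq]
    | add p q hp hq =>
      obtain ⟨u, v, h1, h2, h3⟩ := hp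
      obtain ⟨u', v', h1', h2', h3'⟩ := hq
      refine ⟨u * v' + u' * v, v * v', by simp [h1, h1'], ?_, ?_⟩
      · simp only [map_add, map_mul, ← h2, ← h2']; ring
      · simp only [map_add, map_mul, ← h3, ← h3']; ring
    | mul_X p j hp =>
      obtain ⟨u, v, h1, h2, h3⟩ := hp
      obtain ⟨u', v', h1', h2', h3'⟩ := h j
      refine ⟨u * u', v * v', by simp [h1, h1'], ?_, ?_⟩
      · simp only [aeval_X, map_mul, ← h2, ← h2']; ring
      · simp only [aeval_X, map_mul, ← h3, ← h3']; ring
  obtain ⟨u, v, h1, h2, h3⟩ := key p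
  rw [hp, zero_mul] at h2
  have : u = 0 := hι (by rw [← h2, map_zero])
  rw [this, map_zero] at h3
  exact (mul_eq_zero.1 h3).resolve_right h1

lemma field_aux {F : Type*} [Field F] (x y z a b : F) (hab : a - b ≠ 0)
    (h1 : x - a * y ≠ 0) (h2 : x - b * y ≠ 0) :
    x * z / (x - a * y) * (x * z / (x - b * y)) =
      (a - b)⁻¹ * (z * (a * (x * z / (x - a * y)) - b * (x * z / (x - b * y)))) := by
  rw [div_mul_div_comm, mul_div_assoc', mul_div_assoc', div_sub_div _ _ h1 h2, mul_div_assoc',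
    mul_div_assoc', div_left_inj' (mul_ne_zero h1 h2), eq_inv_mul_iff_mul_eq₀ hab]
  ring

lemma coeff_aux {K : Type*} [Field K] {k : ℕ} (i : Fin k) (f : MvPolynomial (Fin k) K) (m : ℕ) :
    (aeval (fun j => if j = i then (Polynomial.X : Polynomial K) else 0) f).coeff m
      = f.coeff (Finsupp.single i m) := by
  induction f using MvPolynomial.induction_on' with
  | add p q hp hq => simp [hp, hq]
  | monomial u a =>
    rw [aeval_monomial, coeff_monomial]
    by_cases hu : ∃ j, j ≠ i ∧ u j ≠ 0
    · obtain ⟨j, hj, hj'⟩ := hu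
      have : u.prod (fun j e => (if j = i then (Polynomial.X : Polynomial K) else 0) ^ e) = 0 := by
        apply Finset.prod_eq_zero (i := j) (by simpa using hj')
        simp [hj, hj']
      rw [this, if_neg]
      · simp
      · rintro rfl
        simp [Finsupp.single_apply, Ne.symm hj] at hj'
    · push Not at hu
      have : u = Finsupp.single i (u i) := by
        ext j
        by_cases hj : j = i
        · subst hj; simp
        · simp [Finsupp.single_apply, Ne.symm hj, hu j hj]
      rw [this, Finsupp.prod_single_index (by simp)]
      simp [Polynomial.coeff_X_pow, Finsupp.single_left_inj, (Finsupp.single_injective i).eq_iff, eq_comm]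

lemma mem_J_aux {K : Type*} [Field K] {k : ℕ} (hk : 0 < k) (f : MvPolynomial (Fin k) K)
    (h : ∀ i m, f.coeff (Finsupp.single i m) = 0) :
    f ∈ Ideal.span {f : MvPolynomial (Fin k) K | ∃ i j : Fin k, i ≠ j ∧ f = X i * X j} := by
  have hs : {f : MvPolynomial (Fin k) K | ∃ i j : Fin k, i ≠ j ∧ f = X i * X j} =
      (fun s => monomial s (1 : K)) ''
        {s | ∃ i j : Fin k, i ≠ j ∧ s = Finsupp.single i 1 + Finsupp.single j 1} := by
    ext g
    constructor
    · rintro ⟨i, j, hij, rfl⟩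
      exact ⟨_, ⟨i, j, hij, rfl⟩, by simp [X, monomial_mul]⟩
    · rintro ⟨_, ⟨i, j, hij, rfl⟩, rfl⟩
      exact ⟨i, j, hij, by simp [X, monomial_mul]⟩
  rw [hs, mem_ideal_span_monomial_image]
  intro u hu
  by_contra hcon
  push Not at hcon
  have hz : ∀ i j, i ≠ j → u i ≠ 0 → u j = 0 := by
    intro i j hij hi
    by_contra hj
    apply hcon _ ⟨i, j, hij, rfl⟩
    intro l
    simp only [Finsupp.add_apply, Finsupp.single_apply]
    split_ifs with h1 h2 h2
    · exact absurd (h1.trans h2.symm) hij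
    · subst h1; omega
    · subst h2; omega
    · simp
  have : ∃ i m, u = Finsupp.single i m := by
    by_cases h0 : u = 0
    · exact ⟨⟨0, hk⟩, 0, by simp [h0]⟩
    · obtain ⟨i, hi⟩ := Finsupp.ne_iff.1 h0
      refine ⟨i, u i, ?_⟩
      ext j
      by_cases hj : i = j
      · subst hj; simp
      · simp [Finsupp.single_apply, hj, hz i j hj hi]
  obtain ⟨i, m, rfl⟩ := this
  exact (mem_support_iff.1 hu) (h i m)

lemma special_aux (K : Type) [Field K] (n k : ℕ) (hn : 0 < n)
    (α : Fin k → K) (hα : Function.Injective α)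
    (hα0 : ∀ i, α i ≠ 0)
    (x y : FractionRing (MvPolynomial (Fin 2) K))
    (hx : x = algebraMap (MvPolynomial (Fin 2) K) _ (X 0))
    (hy : y = algebraMap (MvPolynomial (Fin 2) K) _ (X 1))
    (A : Fin k → FractionRing (MvPolynomial (Fin 2) K))
    (hA : ∀ i, A i = x * y ^ n / (x - algebraMap K _ (α i) * y)) (i : Fin k)
    (p : MvPolynomial (Option (Fin k)) K)
    (hp : aeval (fun o : Option (Fin k) => o.elim y A) p = 0) :
    aeval (fun o : Option (Fin k) => o.elim (0 : Polynomial K)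
      (fun j => if j = i then Polynomial.X else 0)) p = 0 := by
  set ι : MvPolynomial (Fin 2) K →ₐ[K] FractionRing (MvPolynomial (Fin 2) K) :=
    IsScalarTower.toAlgHom K _ _ with hιdef
  have hι : Function.Injective ι := IsFractionRing.injective _ _
  have hιx : ι (X 0) = x := hx.symm
  have hιy : ι (X 1) = y := hy.symm
  have hιC : ∀ c, ι (C c) = algebraMap K _ c := fun c => ι.commutes c
  have hne : ∀ a b : K, b ≠ 0 → algebraMap K _ a * x + algebraMap K _ b * y ^ n ≠ 0 := by
    intro a b hb h0
    have h1 : (C a * X 0 + C b * X 1 ^ n : MvPolynomial (Fin 2) K) = 0 := by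
      apply hι
      simp [hιx, hιy, hιC, h0]
    have := congrArg (eval ![0, 1]) h1
    simp at this
    exact hb this
  have hx0 : x ≠ 0 := by
    rw [← hιx, Ne, map_eq_zero_iff _ hι]; exact X_ne_zero _
  have hy0 : y ≠ 0 := by
    rw [← hιy, Ne, map_eq_zero_iff _ hι]; exact X_ne_zero _
  have hxy : x - y ^ n ≠ 0 := by
    have := hne 1 (-1) (by simp)
    simpa [sub_eq_add_neg] using this
  have hden : ∀ j, x - algebraMap K _ (α j) * y ≠ 0 := by
    intro j h0
    have h1 : (X 0 - C (α j) * X 1 : MvPolynomial (Fin 2) K) = 0 := by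
      apply hι
      simp [hιx, hιy, hιC, h0]
    have := congrArg (eval ![1, 0]) h1
    simp at this
  let Φ : MvPolynomial (Fin 2) K →ₐ[K] FractionRing (MvPolynomial (Fin 2) K) :=
    aeval ![algebraMap K _ (α i) * y * x / (x - y ^ n), y]
  have hΦ0 : Φ (X 0) = algebraMap K _ (α i) * y * x / (x - y ^ n) := by simp [Φ]
  have hΦ1 : Φ (X 1) = y := by simp [Φ]
  have hΦC : ∀ c, Φ (C c) = algebraMap K _ c := fun c => Φ.commutes c
  let d : Fin k → FractionRing (MvPolynomial (Fin 2) K) := fun j =>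
    algebraMap K _ (α i - α j) * x + algebraMap K _ (α j) * y ^ n
  have hd : ∀ j, d j ≠ 0 := fun j => hne _ _ (hα0 j)
  let B : Fin k → FractionRing (MvPolynomial (Fin 2) K) := fun j =>
    algebraMap K _ (α i) * y ^ n * x / d j
  have h1 : aeval (fun o : Option (Fin k) => o.elim y B) p = 0 := by
    refine spec_aux ι hι Φ _ _ ?_ p hp
    rintro (_ | j)
    · exact ⟨X 1, 1, by simp, by simp [hιy], by simp [hΦ1]⟩
    · have e : Φ (X 0 - C (α j) * X 1) = y * d j / (x - y ^ n) := by
        simp only [map_sub, map_mul, hΦ0, hΦ1, hΦC, d]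
        field_simp
        ring
      refine ⟨X 0 * X 1 ^ n, X 0 - C (α j) * X 1, ?_, ?_, ?_⟩
      · rw [e]
        exact div_ne_zero (mul_ne_zero hy0 (hd j)) hxy
      · simp only [Option.elim, map_sub, map_mul, map_pow, hιx, hιy, hιC, hA]
        exact div_mul_cancel₀ _ (hden j)
      · rw [e]
        simp only [Option.elim, map_mul, map_pow, hΦ0, hΦ1, B]
        have := hd j
        field_simp
  let κ : Polynomial K →ₐ[K] FractionRing (Polynomial K) := IsScalarTower.toAlgHom K _ _
  have hκ : Function.Injective κ := IsFractionRing.injective _ _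
  let Ψ : MvPolynomial (Fin 2) K →ₐ[K] FractionRing (Polynomial K) :=
    aeval ![κ Polynomial.X, 0]
  have hΨ0 : Ψ (X 0) = κ Polynomial.X := by simp [Ψ]
  have hΨ1 : Ψ (X 1) = 0 := by simp [Ψ]
  have hΨC : ∀ c, Ψ (C c) = algebraMap K _ c := fun c => Ψ.commutes c
  have hs : κ Polynomial.X ≠ 0 := by
    rw [Ne, map_eq_zero_iff _ hκ]; exact Polynomial.X_ne_zero
  have h2 : aeval (fun o : Option (Fin k) => κ (o.elim (0 : Polynomial K)
      (fun j => if j = i then Polynomial.X else 0))) p = 0 := by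
    refine spec_aux ι hι Ψ _ _ ?_ p h1
    rintro (_ | j)
    · exact ⟨X 1, 1, by simp, by simp [hιy], by simp [hΨ1]⟩
    · by_cases hj : j = i
      · subst hj
        refine ⟨X 0, 1, by simp, ?_, by simp [hΨ0]⟩
        have := hne 0 (α j) (hα0 j)
        have h3 : algebraMap K (FractionRing (MvPolynomial (Fin 2) K)) (α j) ≠ 0 := by
          simpa using hα0 j
        simp only [Option.elim, map_one, mul_one, hιx, B, d, sub_self, map_zero, zero_mul, zero_add]
        field_simp
      · refine ⟨C (α i) * X 1 ^ n * X 0, C (α i - α j) * X 0 + C (α j) * X 1 ^ n, ?_, ?_, ?_⟩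
        · simp only [map_add, map_mul, map_pow, hΨ0, hΨ1, hΨC, zero_pow hn.ne', mul_zero, add_zero]
          refine mul_ne_zero ?_ hs
          rw [Ne, map_eq_zero, sub_eq_zero]
          exact fun h => hj (hα h).symm
        · simp only [Option.elim, map_add, map_mul, map_pow, hιx, hιy, hιC]
          exact div_mul_cancel₀ _ (hd j)
        · simp [hΨ1, hj, hn.ne']
  apply hκ
  rw [map_zero, ← h2, ← comp_aeval_apply]

/-- Let `K` be a field, `n, k` positive integers, and
`α₁,…,α_k` distinct nonzero elements of `K`.  With
`Aᵢ = XYⁿ/(X - αᵢY) ∈ K(X,Y)` and `R = K[Y, A₁,…,A_k]`, the quotient `R/YR` is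
isomorphic as a `K`-algebra to `K[T₁,…,T_k]/(TᵢTⱼ : i ≠ j)`. -/
theorem quotient_iso_squarefree (K : Type) [Field K] (n k : ℕ) (hn : 0 < n)
    (hk : 0 < k) (α : Fin k → K) (hα : Function.Injective α)
    (hα0 : ∀ i, α i ≠ 0)
    (x y : FractionRing (MvPolynomial (Fin 2) K))
    (hx : x = algebraMap (MvPolynomial (Fin 2) K) _ (X 0))
    (hy : y = algebraMap (MvPolynomial (Fin 2) K) _ (X 1))
    (A : Fin k → FractionRing (MvPolynomial (Fin 2) K))
    (hA : ∀ i, A i = x * y ^ n / (x - algebraMap K _ (α i) * y))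
    (R : Subalgebra K (FractionRing (MvPolynomial (Fin 2) K)))
    (hR : R = Algebra.adjoin K ({y} ∪ Set.range A))
    (yR : ↥R) (hyR : (yR : FractionRing (MvPolynomial (Fin 2) K)) = y)
    (J : Ideal (MvPolynomial (Fin k) K))
    (hJ : J = Ideal.span {f | ∃ i j : Fin k, i ≠ j ∧ f = X i * X j}) :
    Nonempty ((↥R ⧸ Ideal.span {yR}) ≃ₐ[K] (MvPolynomial (Fin k) K ⧸ J)) := by
  have hAm : ∀ i, A i ∈ R := fun i => by
    rw [hR]; exact Algebra.subset_adjoin (Or.inr ⟨i, rfl⟩)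
  let AR : Fin k → R := fun i => ⟨A i, hAm i⟩
  let q : MvPolynomial (Option (Fin k)) K →ₐ[K] R := aeval (fun o => o.elim yR AR)
  have hq : ∀ p, (q p : FractionRing (MvPolynomial (Fin 2) K)) =
      aeval (fun o : Option (Fin k) => o.elim y A) p := by
    intro p
    change R.val (q p) = _
    simp only [q]
    rw [comp_aeval_apply]
    congr 2
    funext o
    cases o
    · exact hyR
    · rfl
  have hqs : Function.Surjective q := by
    rintro ⟨r, hr⟩
    have e : ({y} ∪ Set.range A) = Set.range (fun o : Option (Fin k) => o.elim y A) := by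
      ext z
      simp [Option.exists, eq_comm]
    have hr' := hr
    rw [hR, e, Algebra.adjoin_range_eq_range_aeval] at hr'
    obtain ⟨p, hp⟩ := hr'
    exact ⟨p, Subtype.ext ((hq p).trans hp)⟩
  let π : R →ₐ[K] (R ⧸ Ideal.span {yR}) := Ideal.Quotient.mkₐ K _
  have hπs : Function.Surjective π := Ideal.Quotient.mkₐ_surjective K _
  have hπy : π yR = 0 := Ideal.Quotient.eq_zero_iff_mem.2 (Ideal.mem_span_singleton_self _)
  let φ : MvPolynomial (Fin k) K →ₐ[K] (R ⧸ Ideal.span {yR}) := aeval (fun i => π (AR i))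
  have hφq : ∀ f, φ f = π (q (rename some f)) := by
    intro f
    simp only [q, φ, aeval_rename]
    rw [← comp_aeval_apply]
    rfl
  have hφs : Function.Surjective φ := by
    intro z
    obtain ⟨r, rfl⟩ := hπs z
    obtain ⟨p, rfl⟩ := hqs r
    refine ⟨aeval (fun o : Option (Fin k) => o.elim 0 X) p, ?_⟩
    have hc : φ.comp (aeval (fun o : Option (Fin k) => o.elim 0 X)) = π.comp q := by
      apply MvPolynomial.algHom_ext
      intro o
      rw [AlgHom.comp_apply, AlgHom.comp_apply, aeval_X]
      simp only [q, aeval_X]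
      cases o
      · simp only [Option.elim_none, hπy, map_zero]
      · simp only [Option.elim_some, φ, aeval_X]
    exact DFunLike.congr_fun hc p
  have hker : RingHom.ker φ = J := by
    apply le_antisymm
    · intro f hf
      rw [RingHom.mem_ker, hφq] at hf
      obtain ⟨r, hr⟩ := Ideal.mem_span_singleton.1 (Ideal.Quotient.eq_zero_iff_mem.1 hf)
      obtain ⟨g, rfl⟩ := hqs r
      have h0 : aeval (fun o : Option (Fin k) => o.elim y A) (rename some f - X none * g) = 0 := by
        rw [← hq, map_sub, map_mul, hr]
        simp [q]
      rw [hJ]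
      apply mem_J_aux hk
      intro i m
      have := special_aux K n k hn α hα hα0 x y hx hy A hA i _ h0
      rw [map_sub, map_mul, aeval_X, aeval_rename] at this
      rw [Option.elim_none, zero_mul, sub_zero] at this
      rw [← coeff_aux]
      have h3 := congrArg (fun t => Polynomial.coeff t m) this
      exact h3
    · rw [hJ, Ideal.span_le]
      rintro _ ⟨i, j, hij, rfl⟩
      rw [SetLike.mem_coe, RingHom.mem_ker]
      have hden : ∀ j, x - algebraMap K _ (α j) * y ≠ 0 := by
        intro j h0
        have h1 : (X 0 - C (α j) * X 1 : MvPolynomial (Fin 2) K) = 0 := by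
          apply IsFractionRing.injective _ (FractionRing (MvPolynomial (Fin 2) K))
          rw [map_sub, map_mul, ← hx, ← hy, map_zero, ← h0, ← algebraMap_eq,
            ← IsScalarTower.algebraMap_apply]
        have := congrArg (eval ![1, 0]) h1
        simp at this
      have hsub : α i - α j ≠ 0 := sub_ne_zero.2 (fun h => hij (hα h))
      have hsub' : algebraMap K (FractionRing (MvPolynomial (Fin 2) K)) (α i) -
          algebraMap K _ (α j) ≠ 0 := by
        rw [← map_sub, Ne, map_eq_zero]; exact hsub
      have key : AR i * AR j =
          yR * (algebraMap K R (α i - α j)⁻¹ * (yR ^ (n - 1) * (algebraMap K R (α i) * AR i - algebraMap K R (α j) * AR j))) := by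
        rw [mul_left_comm yR, ← mul_assoc yR, ← pow_succ', Nat.sub_add_cancel hn]
        apply Subtype.ext
        change A i * A j = algebraMap K _ (α i - α j)⁻¹ *
          ((yR : FractionRing (MvPolynomial (Fin 2) K)) ^ n *
          (algebraMap K _ (α i) * A i - algebraMap K _ (α j) * A j))
        rw [hyR, hA, hA, map_inv₀, map_sub]
        have h1 := hden i
        have h2 := hden j
        exact field_aux _ _ _ _ _ hsub' h1 h2
      have key2 : π (AR i * AR j) = 0 := by
        rw [key, map_mul π yR, hπy, zero_mul]
      rw [map_mul] at key2 ⊢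
      simp only [φ, aeval_X]
      exact key2
  exact ⟨((Ideal.quotientEquivAlgOfEq K hker.symm).trans
    (Ideal.quotientKerAlgEquivOfSurjective hφs)).symm⟩
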